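/- arXiv:0807.3980 — 2 statements merged into one kernel-verified Lean document; each statement's English description precedes it below -/
import Mathlib

section
/- Let Γ be a residually finite discrete subgroup of SL₂(ℝ)×SL₂(ℝ) that is not a torsion group (i.e., Γ contains an element of infinite order). Then Γ acts properly discontinuously on SL₂(ℝ) by (γ₁,γ₂)·g = γ₁gγ₂⁻¹ if and only if, possibly after composing the inclusion of Γ with the swap automorphism (γ₁,γ₂) ↦ (γ₂,γ₁) of SL₂(ℝ)×SL₂(ℝ), Γ has a finite-index subgroup Γ' for which there exist a discrete subgroup Γ₀ of SL₂(ℝ) and a group homomorphism φ : Γ₀ → SL₂(ℝ) such that Γ' = {(γ, φ(γ)) : γ ∈ Γ₀} and, for every real C > 0, all but finitely many γ ∈ Γ₀ satisfy C·‖φ(γ)‖ < ‖γ‖. -/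
/-!
STATEMENT 1: residually finite, non-torsion discrete subgroups of SL₂(ℝ)×SL₂(ℝ)
act properly discontinuously on SL₂(ℝ) iff, up to swapping the two factors, they
virtually are graphs of the stated form.
-/

open Matrix

/-- `SL₂(ℝ)`. -/
abbrev SL2R := Matrix.SpecialLinearGroup (Fin 2) ℝ

/-- The topology on SL₂(ℝ) as a subset of the 2×2 real matrices. -/
instance : TopologicalSpace SL2R :=
  TopologicalSpace.induced (fun g => (g : Matrix (Fin 2) (Fin 2) ℝ)) inferInstance

/-- The operator norm of `g ∈ SL₂(ℝ)` acting on Euclidean ℝ². -/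
noncomputable def sl2OpNorm (g : SL2R) : ℝ :=
  ‖Matrix.toEuclideanCLM (𝕜 := ℝ) (g : Matrix (Fin 2) (Fin 2) ℝ)‖

/-!
Write `μ = log ‖·‖` for the Cartan projection and `δ (γ₁, γ₂) = μ γ₁ - μ γ₂`. Since `μ` is
subadditive and proper, and since `KAK` produces `k` with `μ k = 0` and
`μ (γ₁ k γ₂⁻¹) = |δ (γ₁, γ₂)|`, the action of `Γ` is properly discontinuous iff `|δ| → ∞` along `Γ`.

Translating the argument changes `δ` by a bounded amount, so if `|δ| → ∞`, then `{δ > 0}` is an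
almost invariant subset of `Γ`, and it is symmetric because `δ (γ⁻¹) = δ γ`. In a group with an
element of infinite order, symmetric almost invariant sets are finite or cofinite: after a swap,
`δ → ∞`. Then the kernel of the first projection is finite, and by residual finiteness it meets some
finite-index subgroup trivially; that subgroup is the graph.
-/

open Filter Topology

section AlmostInvariant

variable {G : Type*} [Group G] {A : Set G}

/-- A subset of a group is almost invariant if it differs from each of its right translates by a
finite set only. Such sets detect the ends of the group. -/
def IsAlmostInvariant (A : Set G) : Prop :=
  ∀ s : G, ∀ᶠ g in cofinite, g * s ∈ A ↔ g ∈ A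

namespace IsAlmostInvariant

theorem compl (hA : IsAlmostInvariant A) : IsAlmostInvariant Aᶜ := fun s =>
  (hA s).mono fun _ h => not_congr h

theorem eventually_mul_left_mem_iff (hA : IsAlmostInvariant A)
    (hinv : ∀ g, g⁻¹ ∈ A ↔ g ∈ A) (s : G) :
    ∀ᶠ g in cofinite, s * g ∈ A ↔ g ∈ A := by
  filter_upwards [inv_injective.tendsto_cofinite.eventually (hA s⁻¹)] with g hg
  rwa [← _root_.mul_inv_rev, hinv, hinv] at hg

theorem eventuallyConst_zpow_mem (hA : IsAlmostInvariant A) (hinv : ∀ g, g⁻¹ ∈ A ↔ g ∈ A)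
    {t : G} (ht : ¬IsOfFinOrder t) :
    EventuallyConst (fun n : ℤ => t ^ n ∈ A) cofinite := by
  have hpow : EventuallyConst (fun n : ℕ => t ^ n ∈ A) atTop := by
    have htop : Tendsto (fun n : ℕ => t ^ n) atTop cofinite :=
      Nat.cofinite_eq_atTop ▸ (injective_pow_iff_not_isOfFinOrder.2 ht).tendsto_cofinite
    rw [eventuallyConst_atTop_nat, ← eventually_atTop]
    filter_upwards [htop.eventually (hA t)] with n hn
    rw [pow_succ, hn]
  have hnatAbs : Tendsto Int.natAbs cofinite atTop :=
    Nat.cofinite_eq_atTop ▸ Tendsto.cofinite_of_finite_preimage_singleton fun n =>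
      (Set.toFinite {(n : ℤ), -(n : ℤ)}).subset fun m hm => Int.natAbs_eq_iff.1 hm
  refine (hpow.comp_tendsto hnatAbs).congr (.of_forall fun n => propext ?_)
  obtain ⟨m, rfl | rfl⟩ := n.eq_nat_or_neg <;> simp [hinv]

-- Moving along a `⟨t⟩`-coset from a point outside `A` one eventually enters `A`, and the entry
-- points form a finite set.
theorem eventually_mem_of_zpow (hA : IsAlmostInvariant A) (hinv : ∀ g, g⁻¹ ∈ A ↔ g ∈ A)
    {t : G} (ht : ¬IsOfFinOrder t) (hzpow : ∀ᶠ n : ℤ in cofinite, t ^ n ∈ A) :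
    ∀ᶠ g in cofinite, g ∈ A := by
  have htinj : Function.Injective fun n : ℤ => t ^ n := injective_zpow_iff_not_isOfFinOrder.2 ht
  have hcoset : ∀ g : G, ∀ᶠ n : ℤ in cofinite, g * t ^ n ∈ A := fun g => by
    filter_upwards [hzpow, htinj.tendsto_cofinite.eventually
      (hA.eventually_mul_left_mem_iff hinv g)] with n hn hgn
    exact hgn.2 hn
  have hexit : ∀ g ∉ A, ∃ n : ℕ, g * t ^ n ∉ A ∧ g * t ^ n * t ∈ A := fun g hg => by
    by_contra! hstay
    have hall : ∀ n : ℕ, g * t ^ n ∉ A := fun n => by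
      induction n with
      | zero => simpa using hg
      | succ n ih => rw [pow_succ, ← mul_assoc]; exact hstay n ih
    obtain ⟨n, hn⟩ := (Nat.cast_injective.tendsto_cofinite.eventually (hcoset g)).exists
    exact hall n (by simpa using hn)
  refine Set.Finite.of_finite_fibers (QuotientGroup.mk : G → G ⧸ Subgroup.zpowers t) ?_ ?_
  · refine ((hA t).image QuotientGroup.mk).subset ?_
    rintro _ ⟨g, hg, rfl⟩
    obtain ⟨n, hn, hn'⟩ := hexit g hg
    refine ⟨g * t ^ n, fun h => hn (h.1 hn'), QuotientGroup.eq.2 ⟨-n, by simp⟩⟩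
  · rintro _ ⟨g, -, rfl⟩
    refine ((hcoset g).image fun n : ℤ => g * t ^ n).subset ?_
    rintro h ⟨hh, hgh⟩
    obtain ⟨n, hn⟩ := Subgroup.mem_zpowers_iff.1 (QuotientGroup.eq.1 hgh.symm)
    have hgn : g * t ^ n = h := by rw [hn, mul_inv_cancel_left]
    exact ⟨n, fun hmem => hh (hgn ▸ hmem), hgn⟩

theorem eventuallyConst (hA : IsAlmostInvariant A) (hinv : ∀ g, g⁻¹ ∈ A ↔ g ∈ A)
    {t : G} (ht : ¬IsOfFinOrder t) : EventuallyConst A cofinite := by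
  rw [eventuallyConst_set]
  refine (eventuallyConst_pred.1 (hA.eventuallyConst_zpow_mem hinv ht)).imp
    (hA.eventually_mem_of_zpow hinv ht)
    (hA.compl.eventually_mem_of_zpow (fun g => not_congr (hinv g)) ht)

end IsAlmostInvariant

theorem tendsto_abs_atTop_iff {δ : G → ℝ} (hinv : ∀ g, δ g⁻¹ = δ g)
    (hmul : ∀ s, ∃ B, ∀ g, |δ (g * s) - δ g| ≤ B) {t : G} (ht : ¬IsOfFinOrder t) :
    Tendsto (fun g => |δ g|) cofinite atTop ↔
      Tendsto δ cofinite atTop ∨ Tendsto δ cofinite atBot := by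
  refine ⟨fun habs => ?_, fun h =>
    h.elim tendsto_abs_atTop_atTop.comp tendsto_abs_atBot_atTop.comp⟩
  have hpos : IsAlmostInvariant {g | 0 < δ g} := fun s => by
    obtain ⟨B, hB⟩ := hmul s
    filter_upwards [habs.eventually_gt_atTop B] with g hg
    have := abs_le.1 (hB g)
    change 0 < δ (g * s) ↔ 0 < δ g
    grind
  rcases eventuallyConst_set.1
    (hpos.eventuallyConst (fun g => by simp [hinv]) ht) with h | h
  · exact .inl (habs.congr' (h.mono fun g hg => abs_of_pos hg))
  · refine .inr (tendsto_neg_atTop_iff.1 (habs.congr' (h.mono fun g hg => ?_)))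
    exact abs_of_nonpos (not_lt.1 hg)

end AlmostInvariant

section FiniteIndex

variable {G : Type*} [Group G]

theorem tendsto_atTop_of_finiteIndex {δ : G → ℝ}
    (hmul : ∀ s, ∃ B, ∀ g, |δ (s * g) - δ g| ≤ B) (K : Subgroup G) [K.FiniteIndex]
    (hK : Tendsto (fun k : K => δ k) cofinite atTop) : Tendsto δ cofinite atTop := by
  refine tendsto_atTop.2 fun R => ?_
  refine Set.Finite.of_finite_fibers (QuotientGroup.mk : G → G ⧸ K) (Set.toFinite _) ?_
  rintro _ ⟨c, -, rfl⟩
  obtain ⟨B, hB⟩ := hmul c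
  refine ((tendsto_atTop.1 hK (R + B)).image fun k : K => c * k).subset ?_
  rintro g ⟨hg, hgc⟩
  refine ⟨⟨c⁻¹ * g, QuotientGroup.eq.1 hgc.symm⟩, fun hle => hg ?_, mul_inv_cancel_left c g⟩
  have hgB := hB (c⁻¹ * g)
  rw [mul_inv_cancel_left] at hgB
  change R + B ≤ δ (c⁻¹ * g) at hle
  change R ≤ δ g
  linarith [(abs_le.1 hgB).1]

theorem exists_finiteIndex_disjoint [Group.ResiduallyFinite G] (N : Subgroup G) [Finite N] :
    ∃ K : Subgroup G, K.FiniteIndex ∧ Disjoint K N := by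
  have hsep : ∀ n : {n : N // n ≠ 1}, ∃ K : Subgroup G, K.FiniteIndex ∧ (n.1 : G) ∉ K := fun n =>
    Group.residuallyFinite_iff_exists_finiteIndex.1 ‹_› n.1.1 (by simpa using n.2)
  choose K hK hnK using hsep
  refine ⟨⨅ n, K n, Subgroup.finiteIndex_iInf hK, Subgroup.disjoint_def.2 fun {x} hxK hxN => ?_⟩
  by_contra hx
  exact hnK ⟨⟨x, hxN⟩, by simpa using hx⟩ (Subgroup.mem_iInf.1 hxK _)

theorem exists_finiteIndex_map_iff (Γ : Subgroup G) (P : Subgroup G → Prop) :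
    (∃ Γ' ≤ Γ, (Γ'.subgroupOf Γ).FiniteIndex ∧ P Γ') ↔
      ∃ K : Subgroup Γ, K.FiniteIndex ∧ P (K.map Γ.subtype) := by
  constructor
  · rintro ⟨Γ', hle, hfin, hP⟩
    exact ⟨Γ'.subgroupOf Γ, hfin, by rwa [Subgroup.map_subgroupOf_eq_of_le hle]⟩
  · rintro ⟨K, hfin, hP⟩
    refine ⟨K.map Γ.subtype, Subgroup.map_subtype_le K, ?_, hP⟩
    rwa [Subgroup.subgroupOf, Subgroup.comap_map_eq_self_of_injective Γ.subtype_injective]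

end FiniteIndex

section GroupSeminorm

variable {G : Type*} [Group G]

theorem abs_map_mul_mul_sub_map_le (p : GroupSeminorm G) (x g y : G) :
    |p (x * g * y) - p g| ≤ p x + p y := by
  have hupper := map_mul_le_add p (x * g) y
  have hupper' := map_mul_le_add p x g
  have hlower := map_mul_le_add p (x⁻¹ * (x * g * y)) y⁻¹
  have hlower' := map_mul_le_add p x⁻¹ (x * g * y)
  rw [map_inv_eq_map p] at hlower hlower'
  rw [show x⁻¹ * (x * g * y) * y⁻¹ = g by group] at hlower
  exact abs_le.2 ⟨by linarith, by linarith⟩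

theorem abs_sub_map_mul_mul_sub_le (p q : GroupSeminorm G) (x g y : G) :
    |(p (x * g * y) - q (x * g * y)) - (p g - q g)| ≤ p x + p y + (q x + q y) := by
  rw [sub_sub_sub_comm]
  exact (abs_sub _ _).trans
    (add_le_add (abs_map_mul_mul_sub_map_le p x g y) (abs_map_mul_mul_sub_map_le q x g y))

theorem tendsto_abs_sub_atTop_iff (p q : GroupSeminorm G) {t : G} (ht : ¬IsOfFinOrder t) :
    Tendsto (fun g => |p g - q g|) cofinite atTop ↔
      Tendsto (fun g => p g - q g) cofinite atTop ∨
        Tendsto (fun g => q g - p g) cofinite atTop := by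
  have hinv : ∀ g, p g⁻¹ - q g⁻¹ = p g - q g := fun g => by simp only [map_inv_eq_map]
  have hmul : ∀ s, ∃ B, ∀ g, |(p (g * s) - q (g * s)) - (p g - q g)| ≤ B := fun s =>
    ⟨p s + q s, fun g => by simpa using abs_sub_map_mul_mul_sub_le p q 1 g s⟩
  rw [tendsto_abs_atTop_iff hinv hmul ht, ← tendsto_neg_atTop_iff]
  simp only [neg_sub]

end GroupSeminorm

section DominatedGraph

theorem tendsto_comp_cofinite_iff_of_range_eq {ι κ X Y : Type*} {f : ι → X} {g : κ → X}
    (hf : f.Injective) (hg : g.Injective) (hrange : Set.range f = Set.range g) {u : X → Y}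
    {l : Filter Y} : Tendsto (u ∘ f) cofinite l ↔ Tendsto (u ∘ g) cofinite l := by
  rw [← tendsto_map'_iff, ← tendsto_map'_iff, ← hf.comap_cofinite_eq, ← hg.comap_cofinite_eq,
    Filter.map_comap, Filter.map_comap, hrange]

theorem discreteTopology_of_tendsto_cofinite_atTop {X α : Type*} [TopologicalSpace X] [T1Space X]
    [LinearOrder α] [TopologicalSpace α] [OrderTopology α] [NoMaxOrder α] {f : X → α}
    (hcont : Continuous f) (hf : Tendsto f cofinite atTop) : DiscreteTopology X := by
  refine discreteTopology_iff_isOpen_singleton.2 fun x => ?_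
  obtain ⟨r, hr⟩ := exists_gt (f x)
  exact isOpen_singleton_of_finite_mem_nhds x (hcont.continuousAt.eventually_lt_const hr)
    ((hf.eventually_ge_atTop r).subset fun y hy => not_le.2 hy)

variable {G H K Γ : Type*} [Group G] [TopologicalSpace G] [Group H] [Group K] [Group Γ]
  {p : GroupSeminorm G} {q : GroupSeminorm H}

/-- The set `S ⊆ G × H` is the graph of a homomorphism `φ : Γ₀ → H` defined on a discrete subgroup
`Γ₀` of `G` which dominates `φ`: the length `p γ` exceeds `q (φ γ)` by an amount tending to
infinity with `γ`. -/
def IsDominatedGraph (p : GroupSeminorm G) (q : GroupSeminorm H) (S : Set (G × H)) : Prop :=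
  ∃ (Γ₀ : Subgroup G) (φ : Γ₀ →* H), DiscreteTopology Γ₀ ∧
    S = Set.range (fun γ : Γ₀ => ((γ : G), φ γ)) ∧
    Tendsto (fun γ : Γ₀ => p γ - q (φ γ)) cofinite atTop

theorem IsDominatedGraph.tendsto_of_range {f : K →* G × H}
    (h : IsDominatedGraph p q (Set.range f)) (hf : Function.Injective f) :
    Tendsto (fun k => p (f k).1 - q (f k).2) cofinite atTop := by
  obtain ⟨Γ₀, φ, -, hrange, hφ⟩ := h
  have hgraph : Function.Injective fun γ : Γ₀ => ((γ : G), φ γ) := fun γ γ' hγ =>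
    Subtype.ext (congrArg Prod.fst hγ)
  exact (tendsto_comp_cofinite_iff_of_range_eq (u := fun x : G × H => p x.1 - q x.2) hf hgraph
    hrange).2 hφ

theorem isDominatedGraph_range [T1Space G] (hp : Continuous p) {f : K →* G × H}
    (hfst : Function.Injective fun k => (f k).1)
    (h : Tendsto (fun k => p (f k).1 - q (f k).2) cofinite atTop) :
    IsDominatedGraph p q (Set.range f) := by
  let e := MonoidHom.ofInjective (f := (MonoidHom.fst G H).comp f) hfst
  let φ := ((MonoidHom.snd G H).comp f).comp e.symm.toMonoidHom
  have hcoord : ∀ k, f k = ((e k : G), φ (e k)) := fun k => Prod.ext rfl (by simp [φ, e])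
  have hgraph : Set.range f = Set.range (fun γ : MonoidHom.range _ => ((γ : G), φ γ)) := by
    rw [← e.surjective.range_comp]
    exact congrArg Set.range (funext hcoord)
  have hφ : Tendsto (fun γ : MonoidHom.range _ => p γ - q (φ γ)) cofinite atTop :=
    (h.comp e.symm.injective.tendsto_cofinite).congr <| e.surjective.forall.2 fun k => by
      simp [hcoord]
  refine ⟨_, φ, ?_, hgraph, hφ⟩
  exact discreteTopology_of_tendsto_cofinite_atTop (hp.comp continuous_subtype_val)
    (tendsto_atTop_mono (fun γ => sub_le_self _ (apply_nonneg q _)) hφ)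

theorem exists_finiteIndex_isDominatedGraph_image_iff [T1Space G] [Group.ResiduallyFinite Γ]
    (hp : Continuous p) {f : Γ →* G × H} (hf : Function.Injective f) :
    (∃ Γ' : Subgroup Γ, Γ'.FiniteIndex ∧ IsDominatedGraph p q (f '' Γ')) ↔
      Tendsto (fun γ => p (f γ).1 - q (f γ).2) cofinite atTop := by
  have himage : ∀ Γ' : Subgroup Γ, f '' Γ' = Set.range (f.comp Γ'.subtype) := fun Γ' => by
    simp [Set.range_comp]
  have hmul : ∀ s, ∃ B, ∀ γ, |(p (f (s * γ)).1 - q (f (s * γ)).2) - (p (f γ).1 - q (f γ).2)| ≤ B :=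
    fun s => ⟨p (f s).1 + q (f s).2, fun γ => by
      simpa using abs_sub_map_mul_mul_sub_le (p.comp ((MonoidHom.fst G H).comp f))
        (q.comp ((MonoidHom.snd G H).comp f)) s γ 1⟩
  constructor
  · rintro ⟨Γ', hfin, hΓ'⟩
    rw [himage] at hΓ'
    have hinj : Function.Injective (f.comp Γ'.subtype) := hf.comp Γ'.subtype_injective
    exact tendsto_atTop_of_finiteIndex hmul Γ' (hΓ'.tendsto_of_range hinj)
  · intro h
    set N := ((MonoidHom.fst G H).comp f).ker
    have hN : (N : Set Γ).Finite := by
      refine (eventually_cofinite.1 (h.eventually_gt_atTop 0)).subset fun γ hγ => ?_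
      have hγ' : (f γ).1 = 1 := hγ
      simp [hγ', apply_nonneg q]
    have := hN.to_subtype
    obtain ⟨Γ', hfin, hdisj⟩ := exists_finiteIndex_disjoint N
    have hfst : Function.Injective (((MonoidHom.fst G H).comp f).comp Γ'.subtype) :=
      (injective_iff_map_eq_one _).2 fun γ hγ =>
        Subtype.ext (Subgroup.disjoint_def.1 hdisj γ.2 hγ)
    refine ⟨Γ', hfin, ?_⟩
    rw [himage]
    exact isDominatedGraph_range hp hfst (h.comp Subtype.val_injective.tendsto_cofinite)

theorem exists_le_finiteIndex_isDominatedGraph_image_iff {L : Type*} [Group L] [T1Space G]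
    (hp : Continuous p) (Γ : Subgroup L) [Group.ResiduallyFinite Γ] {e : L →* G × H}
    (he : Function.Injective e) :
    (∃ Γ' ≤ Γ, (Γ'.subgroupOf Γ).FiniteIndex ∧ IsDominatedGraph p q (e '' Γ')) ↔
      Tendsto (fun γ : Γ => p (e γ).1 - q (e γ).2) cofinite atTop := by
  have hinj : Function.Injective (e.comp Γ.subtype) := he.comp Γ.subtype_injective
  rw [exists_finiteIndex_map_iff Γ fun Γ' => IsDominatedGraph p q (e '' Γ')]
  simpa [Set.image_image] using exists_finiteIndex_isDominatedGraph_image_iff (q := q) hp hinj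

end DominatedGraph

section SL2

open Real
open scoped Matrix.Norms.L2Operator

theorem sl2OpNorm_eq_norm (g : SL2R) : sl2OpNorm g = ‖(g : Matrix (Fin 2) (Fin 2) ℝ)‖ := rfl

/-- The rotation of the plane by the angle `θ`. These form the factor `SO(2)` of the Cartan
decomposition. -/
noncomputable def sl2Rot (θ : ℝ) : SL2R :=
  ⟨!![cos θ, -sin θ; sin θ, cos θ], by simp [det_fin_two_of, ← sq]⟩

/-- The diagonal matrix with entries `exp s` and `exp (-s)`. Those with `0 ≤ s` form the factor `A⁺`
of the Cartan decomposition. -/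
noncomputable def sl2DiagExp (s : ℝ) : SL2R :=
  ⟨diagonal ![exp s, exp (-s)], by simp [det_diagonal, ← exp_add]⟩

theorem coe_sl2Rot (θ : ℝ) :
    (sl2Rot θ : Matrix (Fin 2) (Fin 2) ℝ) = !![cos θ, -sin θ; sin θ, cos θ] := rfl

theorem coe_sl2DiagExp (s : ℝ) :
    (sl2DiagExp s : Matrix (Fin 2) (Fin 2) ℝ) = diagonal ![exp s, exp (-s)] := rfl

theorem coe_sl2Rot_mul_diagExp_mul_rot (ψ s θ : ℝ) :
    (sl2Rot ψ * sl2DiagExp s * sl2Rot θ : SL2R) =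
      !![exp s * cos ψ * cos θ - exp (-s) * sin ψ * sin θ,
          -(exp s * cos ψ * sin θ) - exp (-s) * sin ψ * cos θ;
        exp s * sin ψ * cos θ + exp (-s) * cos ψ * sin θ,
          exp (-s) * cos ψ * cos θ - exp s * sin ψ * sin θ] := by
  simp only [Matrix.SpecialLinearGroup.coe_mul, coe_sl2Rot, coe_sl2DiagExp, diagonal_vec2,
    mul_fin_two]
  congr! 3 <;> ring_nf

theorem sl2Rot_inv (θ : ℝ) : (sl2Rot θ)⁻¹ = sl2Rot (-θ) := by
  ext i j
  fin_cases i <;> fin_cases j <;> simp [coe_sl2Rot, adjugate_fin_two]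

theorem sl2DiagExp_mul (s t : ℝ) : sl2DiagExp s * sl2DiagExp t = sl2DiagExp (s + t) := by
  ext i j
  fin_cases i <;> fin_cases j <;> simp [coe_sl2DiagExp, exp_add, mul_comm]

theorem sl2DiagExp_zero : sl2DiagExp 0 = 1 := by
  ext i j
  fin_cases i <;> fin_cases j <;> simp [coe_sl2DiagExp]

theorem sl2DiagExp_inv (s : ℝ) : (sl2DiagExp s)⁻¹ = sl2DiagExp (-s) :=
  inv_eq_of_mul_eq_one_right (by rw [sl2DiagExp_mul, add_neg_cancel, sl2DiagExp_zero])

theorem sl2Rot_mem_unitary (θ : ℝ) :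
    (sl2Rot θ : Matrix (Fin 2) (Fin 2) ℝ) ∈ unitary (Matrix (Fin 2) (Fin 2) ℝ) := by
  have hinv : star (sl2Rot θ : Matrix (Fin 2) (Fin 2) ℝ) = ((sl2Rot θ)⁻¹ : SL2R) := by
    rw [sl2Rot_inv]
    ext i j
    fin_cases i <;> fin_cases j <;> simp [coe_sl2Rot, star_apply]
  rw [Unitary.mem_iff, hinv, ← Matrix.SpecialLinearGroup.coe_mul,
    ← Matrix.SpecialLinearGroup.coe_mul]
  simp

theorem sl2OpNorm_rot_mul_mul_rot (ψ θ : ℝ) (g : SL2R) :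
    sl2OpNorm (sl2Rot ψ * g * sl2Rot θ) = sl2OpNorm g := by
  simp only [sl2OpNorm_eq_norm, Matrix.SpecialLinearGroup.coe_mul]
  rw [CStarRing.norm_mul_mem_unitary _ (sl2Rot_mem_unitary θ),
    CStarRing.norm_mem_unitary_mul _ (sl2Rot_mem_unitary ψ)]

theorem sl2OpNorm_diagExp (s : ℝ) : sl2OpNorm (sl2DiagExp s) = exp |s| := by
  have hentries : ∀ i, ‖![exp s, exp (-s)] i‖ ≤ exp |s| := by
    simp [Fin.forall_fin_two, le_abs_self, neg_le_abs]
  have hmax : exp |s| ≤ ‖![exp s, exp (-s)]‖ := by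
    rcases abs_choice s with h | h
    · simpa [h] using norm_le_pi_norm ![exp s, exp (-s)] 0
    · simpa [h] using norm_le_pi_norm ![exp s, exp (-s)] 1
  rw [sl2OpNorm_eq_norm, coe_sl2DiagExp, l2_opNorm_diagonal]
  exact ((pi_norm_le_iff_of_nonneg (exp_nonneg _)).2 hentries).antisymm hmax

-- As a real-linear map of `ℂ`, `g` is `z ↦ α z + β z̄` with `|α|² - |β|² = det g`; rotating on
-- both sides, one can make `α` and `β` non-negative reals.
theorem exists_cartan_decomposition (g : SL2R) :
    ∃ ψ s θ : ℝ, 0 ≤ s ∧ g = sl2Rot ψ * sl2DiagExp s * sl2Rot θ := by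
  set α : ℂ := ⟨(g 0 0 + g 1 1) / 2, (g 1 0 - g 0 1) / 2⟩
  set β : ℂ := ⟨(g 0 0 - g 1 1) / 2, (g 1 0 + g 0 1) / 2⟩
  have hdet : (‖α‖ + ‖β‖) * (‖α‖ - ‖β‖) = 1 := by
    have := g.det_coe
    rw [det_fin_two] at this
    rw [← sq_sub_sq, Complex.sq_norm, Complex.sq_norm, Complex.normSq_apply, Complex.normSq_apply]
    linear_combination this
  have hone : 1 ≤ ‖α‖ + ‖β‖ := by nlinarith [norm_nonneg α, norm_nonneg β]
  have hpos : 0 < ‖α‖ + ‖β‖ := by linarith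
  have hdiff : ‖α‖ - ‖β‖ = (‖α‖ + ‖β‖)⁻¹ := eq_inv_of_mul_eq_one_right hdet
  obtain ⟨ψ, θ, hargα, hargβ⟩ : ∃ ψ θ, α.arg = ψ + θ ∧ β.arg = ψ - θ :=
    ⟨(α.arg + β.arg) / 2, (α.arg - β.arg) / 2, by ring, by ring⟩
  have hreα : ‖α‖ * (cos ψ * cos θ - sin ψ * sin θ) = (g 0 0 + g 1 1) / 2 := by
    rw [← cos_add, ← hargα, Complex.norm_mul_cos_arg]
  have himα : ‖α‖ * (sin ψ * cos θ + cos ψ * sin θ) = (g 1 0 - g 0 1) / 2 := by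
    rw [← sin_add, ← hargα, Complex.norm_mul_sin_arg]
  have hreβ : ‖β‖ * (cos ψ * cos θ + sin ψ * sin θ) = (g 0 0 - g 1 1) / 2 := by
    rw [← cos_sub, ← hargβ, Complex.norm_mul_cos_arg]
  have himβ : ‖β‖ * (sin ψ * cos θ - cos ψ * sin θ) = (g 1 0 + g 0 1) / 2 := by
    rw [← sin_sub, ← hargβ, Complex.norm_mul_sin_arg]
  refine ⟨ψ, log (‖α‖ + ‖β‖), θ, log_nonneg hone, ?_⟩
  ext i j
  fin_cases i <;> fin_cases j <;>
    simp only [coe_sl2Rot_mul_diagExp_mul_rot, exp_neg, exp_log hpos, ← hdiff, Fin.zero_eta,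
      Fin.mk_one, of_apply, cons_val', cons_val_zero, cons_val_one, cons_val_fin_one]
  · linear_combination -hreα - hreβ
  · linear_combination himα - himβ
  · linear_combination -himα - himβ
  · linear_combination hreβ - hreα

theorem sl2OpNorm_mul_le (g h : SL2R) : sl2OpNorm (g * h) ≤ sl2OpNorm g * sl2OpNorm h := by
  simpa only [sl2OpNorm_eq_norm, Matrix.SpecialLinearGroup.coe_mul] using norm_mul_le _ _

theorem sl2OpNorm_inv (g : SL2R) : sl2OpNorm g⁻¹ = sl2OpNorm g := by
  obtain ⟨ψ, s, θ, -, rfl⟩ := exists_cartan_decomposition g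
  rw [_root_.mul_inv_rev, _root_.mul_inv_rev, ← mul_assoc]
  simp only [sl2Rot_inv, sl2DiagExp_inv, sl2OpNorm_rot_mul_mul_rot, sl2OpNorm_diagExp, abs_neg]

theorem one_le_sl2OpNorm (g : SL2R) : 1 ≤ sl2OpNorm g := by
  obtain ⟨ψ, s, θ, -, rfl⟩ := exists_cartan_decomposition g
  rw [sl2OpNorm_rot_mul_mul_rot, sl2OpNorm_diagExp]
  exact one_le_exp (abs_nonneg s)

theorem sl2OpNorm_pos (g : SL2R) : 0 < sl2OpNorm g :=
  zero_lt_one.trans_le (one_le_sl2OpNorm g)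

/-- The Cartan projection `μ g = log ‖g‖` of `SL₂(ℝ)`, bundled with its subadditivity and its
invariance under inversion. -/
noncomputable def cartanProjection : GroupSeminorm SL2R where
  toFun g := log (sl2OpNorm g)
  map_one' := by simp [sl2OpNorm_eq_norm]
  mul_le' g h := by
    rw [← log_mul (sl2OpNorm_pos g).ne' (sl2OpNorm_pos h).ne']
    exact log_le_log (sl2OpNorm_pos _) (sl2OpNorm_mul_le g h)
  inv' g := by rw [sl2OpNorm_inv]

theorem cartanProjection_apply (g : SL2R) : cartanProjection g = log (sl2OpNorm g) := rfl

theorem cartanProjection_rot_mul_diagExp_mul_rot (ψ s θ : ℝ) :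
    cartanProjection (sl2Rot ψ * sl2DiagExp s * sl2Rot θ) = |s| := by
  rw [cartanProjection_apply, sl2OpNorm_rot_mul_mul_rot, sl2OpNorm_diagExp, log_exp]

theorem exists_cartanProjection_mul_mul_inv_eq_abs_sub (a b : SL2R) :
    ∃ k, cartanProjection k = 0 ∧
      cartanProjection (a * k * b⁻¹) = |cartanProjection a - cartanProjection b| := by
  obtain ⟨ψ, s, θ, hs, rfl⟩ := exists_cartan_decomposition a
  obtain ⟨ψ', s', θ', hs', rfl⟩ := exists_cartan_decomposition b
  refine ⟨(sl2Rot θ)⁻¹ * sl2Rot θ', ?_, ?_⟩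
  · simpa [sl2Rot_inv, sl2DiagExp_zero] using cartanProjection_rot_mul_diagExp_mul_rot (-θ) 0 θ'
  · have hcancel : sl2Rot ψ * sl2DiagExp s * sl2Rot θ * ((sl2Rot θ)⁻¹ * sl2Rot θ') *
        (sl2Rot ψ' * sl2DiagExp s' * sl2Rot θ')⁻¹ =
        sl2Rot ψ * (sl2DiagExp s * (sl2DiagExp s')⁻¹) * (sl2Rot ψ')⁻¹ := by group
    rw [hcancel, sl2DiagExp_inv, sl2DiagExp_mul, sl2Rot_inv]
    simp only [cartanProjection_rot_mul_diagExp_mul_rot, abs_of_nonneg hs, abs_of_nonneg hs',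
      sub_eq_add_neg]

theorem isClosedEmbedding_coe_sl2 :
    IsClosedEmbedding fun g : SL2R => (g : Matrix (Fin 2) (Fin 2) ℝ) :=
  Matrix.SpecialLinearGroup.isClosedEmbedding_val

instance : T1Space SL2R := isClosedEmbedding_coe_sl2.isEmbedding.t1Space

theorem continuous_sl2OpNorm : Continuous sl2OpNorm :=
  isClosedEmbedding_coe_sl2.continuous.norm

theorem continuous_cartanProjection : Continuous cartanProjection :=
  continuous_sl2OpNorm.log fun g => (sl2OpNorm_pos g).ne'

theorem isCompact_cartanProjection_le (R : ℝ) : IsCompact {g | cartanProjection g ≤ R} := by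
  have := FiniteDimensional.proper ℝ (Matrix (Fin 2) (Fin 2) ℝ)
  convert isClosedEmbedding_coe_sl2.isCompact_preimage
    (isCompact_closedBall (0 : Matrix (Fin 2) (Fin 2) ℝ) (exp R)) using 1
  ext g
  rw [Set.mem_preimage, mem_closedBall_zero_iff, ← sl2OpNorm_eq_norm]
  exact log_le_iff_le_exp (sl2OpNorm_pos g)

theorem forall_isCompact_finite_iff_tendsto_abs_cartanProjection_sub {ι : Type*} (a b : ι → SL2R) :
    (∀ K L : Set SL2R, IsCompact K → IsCompact L →
      {i | ((fun g => a i * g * (b i)⁻¹) '' K ∩ L).Nonempty}.Finite) ↔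
    Tendsto (fun i => |cartanProjection (a i) - cartanProjection (b i)|) cofinite atTop := by
  constructor
  · refine fun h => tendsto_atTop.2 fun R => ?_
    refine (h _ _ (isCompact_cartanProjection_le 0) (isCompact_cartanProjection_le R)).subset ?_
    intro i (hi : ¬R ≤ _)
    obtain ⟨k, hk, hakb⟩ := exists_cartanProjection_mul_mul_inv_eq_abs_sub (a i) (b i)
    exact ⟨_, ⟨k, hk.le, rfl⟩, hakb.trans_le (not_le.1 hi).le⟩
  · intro h K L hK hL
    obtain ⟨R, hR⟩ := hK.bddAbove_image continuous_cartanProjection.continuousOn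
    obtain ⟨S, hS⟩ := hL.bddAbove_image continuous_cartanProjection.continuousOn
    refine (eventually_cofinite.1 (h.eventually_gt_atTop (S + R))).subset ?_
    rintro i ⟨_, ⟨k, hk, rfl⟩, hkL⟩
    have hle := abs_map_mul_mul_sub_map_le cartanProjection (a i * k * (b i)⁻¹) (b i) k⁻¹
    rw [inv_mul_cancel_right, mul_inv_cancel_right, map_inv_eq_map] at hle
    exact (hle.trans (add_le_add (hS ⟨_, hkL, rfl⟩) (hR ⟨k, hk, rfl⟩))).not_gt

theorem tendsto_cartanProjection_sub_iff {ι : Type*} (a b : ι → SL2R) :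
    Tendsto (fun i => cartanProjection (a i) - cartanProjection (b i)) cofinite atTop ↔
      ∀ C : ℝ, 0 < C → {i | ¬ C * sl2OpNorm (b i) < sl2OpNorm (a i)}.Finite := by
  have hlog : ∀ R i, R < cartanProjection (a i) - cartanProjection (b i) ↔
      exp R * sl2OpNorm (b i) < sl2OpNorm (a i) := fun R i => by
    rw [cartanProjection_apply, cartanProjection_apply,
      ← log_div (sl2OpNorm_pos _).ne' (sl2OpNorm_pos _).ne', lt_log_iff_exp_lt, lt_div_iff₀]
    · exact sl2OpNorm_pos _
    · exact div_pos (sl2OpNorm_pos _) (sl2OpNorm_pos _)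
  constructor
  · intro h C hC
    filter_upwards [h.eventually_gt_atTop (log C)] with i hi
    rwa [hlog, exp_log hC] at hi
  · refine fun h => tendsto_atTop.2 fun R => ?_
    filter_upwards [h (exp R) (exp_pos R)] with i hi
    exact ((hlog R i).2 hi).le

theorem isDominatedGraph_cartanProjection_iff (S : Set (SL2R × SL2R)) :
    IsDominatedGraph cartanProjection cartanProjection S ↔
      ∃ Γ₀ : Subgroup SL2R, ∃ φ : Γ₀ →* SL2R, DiscreteTopology Γ₀ ∧
        S = {x : SL2R × SL2R | ∃ γ : Γ₀, x = ((γ : SL2R), φ γ)} ∧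
        ∀ C : ℝ, 0 < C → {γ : Γ₀ | ¬ C * sl2OpNorm (φ γ) < sl2OpNorm (γ : SL2R)}.Finite := by
  simp only [IsDominatedGraph, tendsto_cartanProjection_sub_iff, Set.range, eq_comm]

end SL2

theorem stmt_1_general (Γ : Subgroup (SL2R × SL2R))
    (hresfin : ∀ γ : Γ, γ ≠ 1 → ∃ N : Subgroup Γ, N.Normal ∧ N.FiniteIndex ∧ γ ∉ N)
    (hnottorsion : ∃ g ∈ Γ, ¬ IsOfFinOrder g) :
    (∀ K L : Set SL2R, IsCompact K → IsCompact L →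
      {γ : Γ | ((fun g => (γ : SL2R × SL2R).1 * g * ((γ : SL2R × SL2R).2)⁻¹) '' K ∩
        L).Nonempty}.Finite) ↔
    ∃ doSwap : Bool, ∃ Γ' : Subgroup (SL2R × SL2R), Γ' ≤ Γ ∧ (Γ'.subgroupOf Γ).FiniteIndex ∧
      ∃ Γ₀ : Subgroup SL2R, ∃ φ : Γ₀ →* SL2R,
        DiscreteTopology Γ₀ ∧
        (if doSwap then Prod.swap '' (Γ' : Set (SL2R × SL2R)) else (Γ' : Set (SL2R × SL2R)))
          = {x : SL2R × SL2R | ∃ γ : Γ₀, x = ((γ : SL2R), φ γ)} ∧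
        ∀ C : ℝ, 0 < C →
          {γ : Γ₀ | ¬ C * sl2OpNorm (φ γ) < sl2OpNorm (γ : SL2R)}.Finite := by
  have : Group.ResiduallyFinite Γ := Group.residuallyFinite_iff_exists_finiteIndex.2 fun γ hγ =>
    (hresfin γ hγ).imp fun _ h => h.2
  obtain ⟨t, htΓ, ht⟩ := hnottorsion
  have ht' : ¬IsOfFinOrder (⟨t, htΓ⟩ : Γ) := fun h => ht (Submonoid.isOfFinOrder_coe.2 h)
  refine (forall_isCompact_finite_iff_tendsto_abs_cartanProjection_sub _ _).trans <|
    (tendsto_abs_sub_atTop_iff (cartanProjection.comp ((MonoidHom.fst SL2R SL2R).comp Γ.subtype))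
      (cartanProjection.comp ((MonoidHom.snd SL2R SL2R).comp Γ.subtype)) ht').trans ?_
  simp only [Bool.exists_bool, ← isDominatedGraph_cartanProjection_iff]
  refine or_congr ?_ ?_
  · simpa using (exists_le_finiteIndex_isDominatedGraph_image_iff (q := cartanProjection)
      continuous_cartanProjection Γ (e := .id _) Function.injective_id).symm
  · simpa using (exists_le_finiteIndex_isDominatedGraph_image_iff (q := cartanProjection)
      continuous_cartanProjection Γ (e := (MulEquiv.prodComm : _ ≃* SL2R × SL2R).toMonoidHom)
      Prod.swap_injective).symm

theorem stmt_1 (Γ : Subgroup (SL2R × SL2R))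
    (hdiscrete : DiscreteTopology Γ)
    -- Γ is residually finite:
    (hresfin : ∀ γ : Γ, γ ≠ 1 → ∃ N : Subgroup Γ, N.Normal ∧ N.FiniteIndex ∧ γ ∉ N)
    -- Γ is not a torsion group:
    (hnottorsion : ∃ g ∈ Γ, ¬ IsOfFinOrder g) :
    -- Γ acts properly discontinuously on SL₂(ℝ) by (γ₁,γ₂)·g = γ₁gγ₂⁻¹ :
    (∀ K L : Set SL2R, IsCompact K → IsCompact L →
      {γ : Γ | ((fun g => (γ : SL2R × SL2R).1 * g * ((γ : SL2R × SL2R).2)⁻¹) '' K ∩ L).Nonempty}.Finite)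
    ↔
    -- iff, possibly after swapping the two factors, Γ has a finite-index subgroup Γ'
    -- which is a graph:
    ∃ doSwap : Bool, ∃ Γ' : Subgroup (SL2R × SL2R), Γ' ≤ Γ ∧ (Γ'.subgroupOf Γ).FiniteIndex ∧
      ∃ Γ₀ : Subgroup SL2R, ∃ φ : Γ₀ →* SL2R,
        DiscreteTopology Γ₀ ∧
        (if doSwap then Prod.swap '' (Γ' : Set (SL2R × SL2R)) else (Γ' : Set (SL2R × SL2R)))
          = {x : SL2R × SL2R | ∃ γ : Γ₀, x = ((γ : SL2R), φ γ)} ∧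
        ∀ C : ℝ, 0 < C →
          {γ : Γ₀ | ¬ C * sl2OpNorm (φ γ) < sl2OpNorm (γ : SL2R)}.Finite :=
  stmt_1_general Γ hresfin hnottorsion
end

section
/- For every n ≥ 1, every discrete torsion subgroup of GL_n(ℝ) is finite. -/
/-!
A torsion subgroup `Γ` of `GL_n(ℝ)` preserves an inner product. By Schur's theorem the finitely
generated subgroups of `Γ` are finite, so each of them preserves an inner product, found by
averaging. Since the forms preserved by `Γ` make up a finite-dimensional space, they are already
the forms preserved by some finite subset of `Γ`, and averaging over the subgroup which that subset
generates gives the inner product. So `Γ` lies in the compact isometry group of an inner product; a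
discrete subgroup is closed, hence `Γ` is compact and discrete.

Schur's theorem: the matrix entries of a finitely generated linear group `G` generate a ring `R` of
finite type over `ℤ`, whose residue fields are finite. Reducing modulo a maximal ideal with residue
characteristic `l` gives a finite-index subgroup of `G` whose torsion is `l`-primary. A second
maximal ideal with another residue characteristic (invert `l` in `R`) gives a second such subgroup,
and if `G` is torsion the two intersect trivially.
-/

open Matrix

section FiniteTypeOverInt

theorem isJacobsonRing_of_jacobson_bot_eq_bot {R : Type*} [CommRing R] [Ring.DimensionLEOne R]
    (h : (⊥ : Ideal R).jacobson = ⊥) : IsJacobsonRing R := by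
  rw [isJacobsonRing_iff_prime_eq]
  intro P hP
  obtain rfl | hP_ne := eq_or_ne P ⊥
  · exact h
  · have := hP.isMaximal hP_ne
    exact Ideal.jacobson_eq_self_of_isMaximal

theorem int_jacobson_bot : (⊥ : Ideal ℤ).jacobson = ⊥ := by
  refine eq_bot_iff.mpr fun x hx => ?_
  have hunit : IsUnit (x * x + 1) := Ideal.mem_jacobson_bot.mp hx x
  rw [Ideal.mem_bot]
  rcases Int.isUnit_iff.mp hunit with h | h <;> nlinarith

instance isJacobsonRing_int : IsJacobsonRing ℤ :=
  isJacobsonRing_of_jacobson_bot_eq_bot int_jacobson_bot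

theorem finite_of_moduleFinite_int {K : Type*} [Field K] [Module.Finite ℤ K] : Finite K := by
  obtain ⟨l, _⟩ := CharP.exists K
  rcases CharP.char_is_prime_or_zero K l with hl | rfl
  · have : Fact l.Prime := ⟨hl⟩
    let _ : Algebra (ZMod l) K := ZMod.algebra K l
    have : Module.Finite (ZMod l) K := .of_restrictScalars_finite ℤ (ZMod l) K
    exact Module.finite_of_finite (ZMod l)
  · have := CharP.charP_to_charZero K
    exact absurd
      (isField_of_isIntegral_of_isField (algebraMap ℤ K).injective_int (Field.toIsField K))
      Int.not_isField

theorem finite_quotient_of_isMaximal {R : Type*} [CommRing R] [Algebra.FiniteType ℤ R]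
    (m : Ideal R) [m.IsMaximal] : Finite (R ⧸ m) := by
  let _ : Field (R ⧸ m) := Ideal.Quotient.field m
  have : Module.Finite ℤ (R ⧸ m) := finite_of_finite_type_of_isJacobsonRing ℤ (R ⧸ m)
  exact finite_of_moduleFinite_int

end FiniteTypeOverInt

section Schur

variable {ι : Type*} [Fintype ι] [DecidableEq ι] {G : Type*} [Group G]

theorem matrix_eq_one_of_map_eq_one_of_pow_eq_one {R K : Type*} [CommRing R] [IsDomain R]
    [CommRing K] [IsDomain K] (f : R →+* K) {X : Matrix ι ι R} (hX : f.mapMatrix X = 1) {q : ℕ}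
    (hq : (q : K) ≠ 0) (hXq : X ^ q = 1) : X = 1 := by
  set N := ∑ i ∈ Finset.range q, X ^ i with hN
  have hN_mul : N * (X - 1) = 0 := by rw [hN, geom_sum_mul, hXq, sub_self]
  have hN_map : f.mapMatrix N = (q : K) • (1 : Matrix ι ι K) := by
    simp [hN, hX, -RingHom.mapMatrix_apply, Nat.cast_smul_eq_nsmul]
  have hN_det : N.det ≠ 0 := by
    intro h
    have hdet := f.map_det N
    rw [h, map_zero, hN_map, det_smul, det_one, mul_one] at hdet
    exact pow_ne_zero _ hq hdet.symm
  have hN_reg := isRegular_of_isLeftRegular_det (isRegular_iff_ne_zero.mpr hN_det).left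
  exact sub_eq_zero.mp (hN_reg.left.mul_left_eq_zero_iff.mp hN_mul)

theorem isPGroup_ker_map_comp {R K : Type*} [CommRing R] [IsDomain R] [CommRing K] [IsDomain K]
    (f : R →+* K) (l : ℕ) [CharP K l] (hG : IsMulTorsion G) (ρ : G →* GL ι R)
    (hρ : Function.Injective ρ) : IsPGroup l ((GeneralLinearGroup.map f).comp ρ).ker := by
  rintro ⟨g, hg⟩
  obtain ⟨k, q, hq, horder⟩ :=
    Nat.exists_eq_pow_mul_and_not_dvd (hG g).orderOf_pos.ne' l (CharP.char_ne_one K l)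
  refine ⟨k, Subtype.ext (hρ (Units.ext ?_))⟩
  have hpow : (g ^ l ^ k) ^ q = 1 := by rw [← pow_mul, ← horder, pow_orderOf_eq_one]
  have hmap : GeneralLinearGroup.map f (ρ (g ^ l ^ k)) = 1 := Subgroup.pow_mem _ hg _
  have hone := matrix_eq_one_of_map_eq_one_of_pow_eq_one f (congrArg Units.val hmap)
    (mt (CharP.cast_eq_zero_iff K l q).mp hq)
    (by rw [← Units.val_pow_eq_pow_val, ← map_pow, hpow, map_one, Units.val_one])
  simpa using hone

theorem exists_finiteIndex_isPGroup_of_finiteType {R : Type*} [CommRing R] [IsDomain R]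
    [Algebra.FiniteType ℤ R] (hG : IsMulTorsion G) (ρ : G →* GL ι R) (hρ : Function.Injective ρ)
    {p : ℕ} (hp : IsUnit (p : R)) :
    ∃ l : ℕ, l.Prime ∧ l ≠ p ∧ ∃ N : Subgroup G, N.FiniteIndex ∧ IsPGroup l N := by
  obtain ⟨m, _⟩ := Ideal.exists_maximal R
  have := finite_quotient_of_isMaximal m
  obtain ⟨l, _⟩ := CharP.exists (R ⧸ m)
  refine ⟨l, CharP.char_is_prime (R ⧸ m) l, ?_, _, inferInstance,
    isPGroup_ker_map_comp (Ideal.Quotient.mk m) l hG ρ hρ⟩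
  rintro rfl
  have hunit : IsUnit (l : R ⧸ m) := by simpa using hp.map (Ideal.Quotient.mk m)
  exact hunit.ne_zero (CharP.cast_eq_zero (R ⧸ m) l)

theorem mem_range_map_algebraMap {k A : Type*} [CommRing k] [CommRing A] [Algebra k A]
    {R : Subalgebra k A} {g : GL ι A} (hg : ∀ i j, g i j ∈ R) (hg_inv : ∀ i j, g⁻¹ i j ∈ R) :
    g ∈ (GeneralLinearGroup.map (n := ι) (algebraMap R A)).range := by
  let X : Matrix ι ι R := fun i j => ⟨g i j, hg i j⟩
  let Y : Matrix ι ι R := fun i j => ⟨g⁻¹ i j, hg_inv i j⟩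
  have hX : (algebraMap R A).mapMatrix X = g.val := rfl
  have hY : (algebraMap R A).mapMatrix Y = g⁻¹.val := rfl
  have hinj : Function.Injective ((algebraMap R A).mapMatrix (m := ι)) :=
    Matrix.map_injective Subtype.val_injective
  refine ⟨⟨X, Y, hinj ?_, hinj ?_⟩, Units.ext hX⟩
  · rw [map_mul, hX, hY, map_one, Units.mul_inv]
  · rw [map_mul, hX, hY, map_one, Units.inv_mul]

theorem exists_finiteType_subalgebra_lift (k : Type*) {A : Type*} [CommRing k] [CommRing A]
    [Algebra k A] [Group.FG G] (ρ : G →* GL ι A) (a : A) :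
    ∃ R : Subalgebra k A, Algebra.FiniteType k R ∧ a ∈ R ∧
      ∃ ρ' : G →* GL ι R, (GeneralLinearGroup.map (algebraMap R A)).comp ρ' = ρ := by
  obtain ⟨S, hS, hS_fin⟩ := Group.fg_iff.mp ‹Group.FG G›
  let entry (x : G × ι × ι) : A := ρ x.1 x.2.1 x.2.2
  set E : Set A := insert a (entry '' (S ∪ S⁻¹) ×ˢ Set.univ)
  have hE : E.Finite := (((hS_fin.union hS_fin.inv).prod Set.finite_univ).image entry).insert a
  set R := Algebra.adjoin k E
  have hentry : ∀ g ∈ S ∪ S⁻¹, ∀ i j, ρ g i j ∈ R := fun g hg i j =>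
    Algebra.subset_adjoin (Set.mem_insert_of_mem a ⟨(g, i, j), ⟨hg, trivial⟩, rfl⟩)
  have hρ_mem : ∀ g, ρ g ∈ (GeneralLinearGroup.map (n := ι) (algebraMap R A)).range := by
    have hle : (⊤ : Subgroup G) ≤ (GeneralLinearGroup.map (algebraMap R A)).range.comap ρ := by
      rw [← hS, Subgroup.closure_le]
      refine fun g hg => mem_range_map_algebraMap (hentry g (.inl hg)) ?_
      simpa using hentry g⁻¹ (.inr (Set.inv_mem_inv.mpr hg))
    exact fun g => hle trivial
  have hinj : Function.Injective (GeneralLinearGroup.map (n := ι) (algebraMap R A)) :=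
    Units.map_injective (Matrix.map_injective Subtype.val_injective)
  exact ⟨R, .adjoin_of_finite hE, Algebra.subset_adjoin (Set.mem_insert _ _),
    (MonoidHom.ofInjective hinj).symm.toMonoidHom.comp (ρ.codRestrict _ hρ_mem),
    MonoidHom.ext fun g => MonoidHom.apply_ofInjective_symm hinj ⟨ρ g, hρ_mem g⟩⟩

theorem exists_finiteIndex_isPGroup_of_fg {K : Type*} [Field K] [CharZero K] [Group.FG G]
    (hG : IsMulTorsion G) (ρ : G →* GL ι K) (hρ : Function.Injective ρ) {p : ℕ} (hp : p ≠ 0) :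
    ∃ l : ℕ, l.Prime ∧ l ≠ p ∧ ∃ N : Subgroup G, N.FiniteIndex ∧ IsPGroup l N := by
  obtain ⟨R, _, hp_inv, ρ', rfl⟩ := exists_finiteType_subalgebra_lift ℤ ρ (p : K)⁻¹
  have hρ' : Function.Injective ρ' := .of_comp (by simpa using hρ)
  refine exists_finiteIndex_isPGroup_of_finiteType hG ρ' hρ' (.of_mul_eq_one ⟨_, hp_inv⟩ ?_)
  exact Subtype.ext (by simp [hp])

/-- **Schur's theorem** on finitely generated torsion linear groups, in characteristic zero. -/
theorem finite_of_fg_of_isMulTorsion {K : Type*} [Field K] [CharZero K] [Group.FG G]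
    (hG : IsMulTorsion G) (ρ : G →* GL ι K) (hρ : Function.Injective ρ) : Finite G := by
  obtain ⟨l₁, hl₁, -, N₁, _, hN₁⟩ := exists_finiteIndex_isPGroup_of_fg hG ρ hρ one_ne_zero
  obtain ⟨l₂, hl₂, hne, N₂, _, hN₂⟩ := exists_finiteIndex_isPGroup_of_fg hG ρ hρ hl₁.ne_zero
  have : Fact l₁.Prime := ⟨hl₁⟩
  have : Fact l₂.Prime := ⟨hl₂⟩
  have hbot : N₁ ⊓ N₂ = ⊥ := (IsPGroup.disjoint_of_ne l₁ l₂ hne.symm N₁ N₂ hN₁ hN₂).eq_bot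
  exact (⊥ : Subgroup G).finite_iff_finite_and_finiteIndex.mpr
    ⟨inferInstance, hbot ▸ inferInstance⟩

end Schur

section InvariantForms

variable {ι : Type*} [Fintype ι] [DecidableEq ι] {R : Type*} [CommRing R] [StarRing R]

/-- The isometry group of the sesquilinear form `(x, y) ↦ xᴴ B y`. -/
def isometryGroup (B : Matrix ι ι R) : Subgroup (GL ι R) where
  carrier := {g | g.valᴴ * B * g.val = B}
  one_mem' := by simp
  mul_mem' {g h} hg hh := by
    calc (g * h).valᴴ * B * (g * h).val = h.valᴴ * (g.valᴴ * B * g.val) * h.val := by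
          simp only [Units.val_mul, conjTranspose_mul, Matrix.mul_assoc]
      _ = B := by rw [hg, hh]
  inv_mem' {g} hg := by
    calc g⁻¹.valᴴ * B * g⁻¹.val = g⁻¹.valᴴ * (g.valᴴ * B * g.val) * g⁻¹.val := by rw [hg]
      _ = (g.val * g⁻¹.val)ᴴ * B * (g.val * g⁻¹.val) := by
          simp only [conjTranspose_mul, Matrix.mul_assoc]
      _ = B := by simp

theorem mem_isometryGroup {B : Matrix ι ι R} {g : GL ι R} :
    g ∈ isometryGroup B ↔ g.valᴴ * B * g.val = B := Iff.rfl

theorem mem_isometryGroup_conjTranspose_mul_self {C g : GL ι R} :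
    g ∈ isometryGroup (C.valᴴ * C.val) ↔ (C * g * C⁻¹).val ∈ unitaryGroup ι R := by
  have hconj : star (C * g * C⁻¹).val * (C * g * C⁻¹).val =
      (star C⁻¹).val * (g.valᴴ * (C.valᴴ * C.val) * g.val) * C⁻¹.val := by
    simp only [Units.val_mul, Units.coe_star, star_eq_conjTranspose, conjTranspose_mul,
      Matrix.mul_assoc]
  have hone : 1 = (star C⁻¹).val * (C.valᴴ * C.val) * C⁻¹.val := by
    have hunits : 1 = star C⁻¹ * (star C * C) * C⁻¹ := by rw [star_inv]; group
    exact congrArg Units.val hunits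
  rw [mem_isometryGroup, mem_unitaryGroup_iff', hconj, hone, Units.mul_left_inj,
    Units.mul_right_inj]

/-- The space of sesquilinear forms, given by their Gram matrices, preserved by every element
of `S`. -/
def invariantForms (S : Set (GL ι R)) : Submodule R (Matrix ι ι R) where
  carrier := {B | S ⊆ isometryGroup B}
  add_mem' {A B} hA hB g hg := by
    rw [SetLike.mem_coe, mem_isometryGroup, mul_add, add_mul, hA hg, hB hg]
  zero_mem' g _ := by simp [mem_isometryGroup]
  smul_mem' c A hA g hg := by
    rw [SetLike.mem_coe, mem_isometryGroup, mul_smul_comm, smul_mul_assoc, hA hg]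

theorem mem_invariantForms {S : Set (GL ι R)} {B : Matrix ι ι R} :
    B ∈ invariantForms S ↔ S ⊆ isometryGroup B := Iff.rfl

theorem exists_finite_subset_invariantForms_eq {K : Type*} [Field K] [StarRing K]
    (S : Set (GL ι K)) : ∃ T ⊆ S, T.Finite ∧ invariantForms T = invariantForms S := by
  obtain ⟨T, ⟨hTS, hT⟩, hmin⟩ := exists_minimalFor_of_wellFoundedLT
    (fun T : Set (GL ι K) => T ⊆ S ∧ T.Finite) invariantForms
    ⟨∅, Set.empty_subset S, Set.finite_empty⟩
  refine ⟨T, hTS, hT, le_antisymm (fun B hB g hg => ?_) fun B hB => hTS.trans hB⟩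
  have hle : invariantForms T ≤ invariantForms (insert g T) :=
    hmin ⟨Set.insert_subset hg hTS, hT.insert g⟩ fun A hA => (Set.subset_insert g T).trans hA
  exact hle hB (Set.mem_insert g T)

end InvariantForms

section InvariantInnerProduct

variable {ι : Type*} [Fintype ι] [DecidableEq ι] {𝕜 : Type*} [RCLike 𝕜]

open scoped ComplexOrder

theorem exists_posDef_le_isometryGroup_of_finite (H : Subgroup (GL ι 𝕜)) [Finite H] :
    ∃ B : Matrix ι ι 𝕜, B.PosDef ∧ H ≤ isometryGroup B := by
  have := Fintype.ofFinite H
  refine ⟨∑ h : H, h.1.valᴴ * h.1.val, posDef_sum Finset.univ_nonempty fun h _ => ?_,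
    fun g hg => ?_⟩
  · exact .conjTranspose_mul_self _ (mulVec_injective_of_isUnit h.1.isUnit)
  · rw [mem_isometryGroup, Finset.mul_sum, Finset.sum_mul]
    refine Fintype.sum_equiv (Equiv.mulRight (⟨g, hg⟩ : H)) _ _ fun h => ?_
    simp [Matrix.mul_assoc]

theorem exists_posDef_le_isometryGroup_of_torsion (Γ : Subgroup (GL ι 𝕜))
    (hΓ : ∀ g ∈ Γ, IsOfFinOrder g) : ∃ B : Matrix ι ι 𝕜, B.PosDef ∧ Γ ≤ isometryGroup B := by
  obtain ⟨T, hTΓ, hT, hforms⟩ := exists_finite_subset_invariantForms_eq (Γ : Set (GL ι 𝕜))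
  have := hT.to_subtype
  have htorsion : IsMulTorsion (Subgroup.closure T) := fun g =>
    Submonoid.isOfFinOrder_coe.mp (hΓ g ((Subgroup.closure_le Γ).mpr hTΓ g.2))
  have := finite_of_fg_of_isMulTorsion htorsion _ (Subgroup.closure T).subtype_injective
  obtain ⟨B, hB, hT_le⟩ := exists_posDef_le_isometryGroup_of_finite (Subgroup.closure T)
  have hB_mem : B ∈ invariantForms T := Subgroup.subset_closure.trans hT_le
  exact ⟨B, hB, mem_invariantForms.mp (hforms ▸ hB_mem)⟩

theorem isCompact_unitaryGroup : IsCompact (unitaryGroup ι 𝕜 : Set (Matrix ι ι 𝕜)) := by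
  have hbox : IsCompact (Set.univ.pi fun _ => Set.univ.pi fun _ => Metric.closedBall 0 1 :
      Set (Matrix ι ι 𝕜)) :=
    isCompact_univ_pi fun _ => isCompact_univ_pi fun _ => isCompact_closedBall 0 1
  refine hbox.of_isClosed_subset (isClosed_unitary (R := Matrix ι ι 𝕜)) fun U hU i _ j _ => ?_
  simpa using entry_norm_bound_of_unitary hU i j

theorem continuous_unitary_toUnits {M : Type*} [Monoid M] [StarMul M] [TopologicalSpace M]
    [ContinuousStar M] : Continuous (Unitary.toUnits : unitary M →* Mˣ) :=
  Units.continuous_iff.mpr ⟨continuous_subtype_val, continuous_subtype_val.star⟩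

theorem isCompact_isometryGroup {B : Matrix ι ι 𝕜} (hB : B.PosDef) :
    IsCompact (isometryGroup B : Set (GL ι 𝕜)) := by
  open scoped MatrixOrder in
  obtain ⟨_, ⟨C, rfl⟩, hC⟩ :=
    CStarAlgebra.isStrictlyPositive_iff_eq_star_mul_self.mp hB.isStrictlyPositive
  have : CompactSpace (unitaryGroup ι 𝕜) := isCompact_iff_compactSpace.mp isCompact_unitaryGroup
  have hcont : Continuous fun U : unitaryGroup ι 𝕜 => C⁻¹ * Unitary.toUnits U * C :=
    (continuous_unitary_toUnits.const_mul C⁻¹).mul_const C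
  have hrange : (isometryGroup B : Set (GL ι 𝕜)) =
      Set.range fun U : unitaryGroup ι 𝕜 => C⁻¹ * Unitary.toUnits U * C := by
    ext g
    rw [hC, SetLike.mem_coe, star_eq_conjTranspose, mem_isometryGroup_conjTranspose_mul_self]
    refine ⟨fun hg => ⟨⟨_, hg⟩, Units.ext ?_⟩, ?_⟩
    · simp [Matrix.mul_assoc]
    · rintro ⟨U, rfl⟩
      simp [mul_assoc]
  rw [hrange]
  exact isCompact_range hcont

theorem discreteTopology_of_image_unitsVal {M : Type*} [Monoid M] [TopologicalSpace M] {s : Set Mˣ}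
    (hs : DiscreteTopology (Units.val '' s)) : DiscreteTopology s := by
  have hpreimage : IsDiscrete (Units.val ⁻¹' (Units.val '' s) : Set Mˣ) :=
    IsDiscrete.preimage ⟨hs⟩ Units.continuous_val.continuousOn Units.val_injective
  exact (hpreimage.mono (Set.subset_preimage_image _ s)).to_subtype

theorem stmt_15_general (Γ : Subgroup (GL ι 𝕜)) [DiscreteTopology Γ]
    (hΓ : ∀ g ∈ Γ, IsOfFinOrder g) : Finite Γ := by
  obtain ⟨B, hB, hΓB⟩ := exists_posDef_le_isometryGroup_of_torsion Γ hΓ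
  have hcompact : IsCompact (Γ : Set (GL ι 𝕜)) :=
    (isCompact_isometryGroup hB).of_isClosed_subset Subgroup.isClosed_of_discrete hΓB
  exact hcompact.finite ⟨inferInstance⟩

end InvariantInnerProduct

/-!
STATEMENT 15: for n ≥ 1, every discrete torsion subgroup of GL_n(ℝ) is finite.
Discreteness is expressed by saying that the image of Γ in the space of n×n
real matrices is a discrete subset (for the subspace topology).
-/

theorem stmt_15 (n : ℕ) (hn : 1 ≤ n)
    (Γ : Subgroup (GL (Fin n) ℝ))
    -- Γ is discrete as a subset of the n×n real matrices:
    (hdiscrete : DiscreteTopology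
      ((fun g : GL (Fin n) ℝ => (g : Matrix (Fin n) (Fin n) ℝ)) '' (Γ : Set (GL (Fin n) ℝ))))
    -- Γ is a torsion group:
    (htorsion : ∀ g ∈ Γ, IsOfFinOrder g) :
    (Γ : Set (GL (Fin n) ℝ)).Finite := by
  have : DiscreteTopology Γ := discreteTopology_of_image_unitsVal hdiscrete
  exact stmt_15_general Γ htorsion
end
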